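/- Let x, y, x̃, ỹ ∈ ℝⁿ with first entries ξ₀ ≠ 0 (of x) and ξ̃₀ ≠ 0 (of x̃), let ε > 0 satisfy ‖x̃ − x‖₁ ≤ ε‖x‖₁ and ‖ỹ − y‖₁ ≤ ε‖y‖₁, and set ε̃ = |1/ξ₀ − 1/ξ̃₀| / |1/ξ₀|. Then ‖L⁰_{ỹ}·(1/ξ̃₀)R⁰_{x̃} − L⁰_y·(1/ξ₀)R⁰_x‖₁ ≤ (1/|ξ₀|)·[ε + (ε + (1+ε)ε̃)(1+ε)]·‖x‖₁·‖y‖₁. -/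

import Mathlib

/-!
Write `c = 1/ξ₀`, `c̃ = 1/ξ̃₀` and telescope

  `L̃ (c̃ R̃) - L (c R) = (L̃ - L) (c R) + L̃ (c (R̃ - R) + (c̃ - c) R̃)`.

The induced 1-norm (maximal absolute column sum) is subadditive, submultiplicative and absolutely
homogeneous. The maps `y ↦ L⁰_y` and `x ↦ R⁰_x` are linear, and each column of `L⁰_y` or `R⁰_x`
lists some entries of the generating vector, each at most once, so
`‖L⁰_y‖₁ ≤ ‖y‖₁` and `‖R⁰_x‖₁ ≤ ‖x‖₁`
(`colBound_L0mat`, `colBound_R0mat`). With `|c̃ - c| = |c| ε̃`, `‖x̃‖₁ ≤ (1 + ε) ‖x‖₁` and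
`‖ỹ‖₁ ≤ (1 + ε) ‖y‖₁`, the two summands contribute `|c| ε ‖x‖₁ ‖y‖₁` and
`|c| (ε + (1 + ε) ε̃) (1 + ε) ‖x‖₁ ‖y‖₁`.
-/

open Matrix

noncomputable section

/-- ℓ¹ norm of a vector. -/
def vecNorm1 {n : ℕ} (x : Fin n → ℝ) : ℝ := ∑ i, |x i|

/-- ℓ² norm of a vector. -/
def vecNorm2 {n : ℕ} (x : Fin n → ℝ) : ℝ := Real.sqrt (∑ i, (x i) ^ 2)

/-- Matrix operator norm induced by the ℓ¹ vector norm (max absolute column sum). -/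
def matNorm1 {n : ℕ} (M : Matrix (Fin n) (Fin n) ℝ) : ℝ := ⨆ j, ∑ i, |M i j|

/-- Matrix operator norm induced by the ℓ∞ vector norm (max absolute row sum). -/
def matNormInf {n : ℕ} (M : Matrix (Fin n) (Fin n) ℝ) : ℝ := ⨆ i, ∑ j, |M i j|

/-- Spectral norm: operator norm induced by the ℓ² vector norm. -/
def matNorm2 {n : ℕ} (M : Matrix (Fin n) (Fin n) ℝ) : ℝ :=
  ‖Matrix.toEuclideanCLM (𝕜 := ℝ) M‖

/-- The last index of `Fin n`. -/
def lastIdx (n : ℕ) [NeZero n] : Fin n := ⟨n - 1, by have := Nat.pos_of_neZero n; omega⟩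

/-- Lower triangular Toeplitz matrix built from `x`. -/
def Lmat {n : ℕ} (x : Fin n → ℝ) : Matrix (Fin n) (Fin n) ℝ :=
  Matrix.of fun i j =>
    if (j : ℕ) ≤ i then x ⟨(i : ℕ) - j, lt_of_le_of_lt (Nat.sub_le _ _) i.isLt⟩ else 0

/-- Upper triangular Toeplitz matrix built from `y`. -/
def Rmat {n : ℕ} (y : Fin n → ℝ) : Matrix (Fin n) (Fin n) ℝ :=
  Matrix.of fun i j =>
    if (i : ℕ) ≤ j then y ⟨n - 1 - ((j : ℕ) - i), by have := i.isLt; omega⟩ else 0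

/-- Strictly lower triangular Toeplitz matrix built from `y`. -/
def L0mat {n : ℕ} (y : Fin n → ℝ) : Matrix (Fin n) (Fin n) ℝ :=
  Matrix.of fun i j =>
    if (j : ℕ) < i then y ⟨(i : ℕ) - j - 1, by have := i.isLt; omega⟩ else 0

/-- Strictly upper triangular Toeplitz matrix built from `x`. -/
def R0mat {n : ℕ} (x : Fin n → ℝ) : Matrix (Fin n) (Fin n) ℝ :=
  Matrix.of fun i j =>
    if h : (i : ℕ) < j then x ⟨n - ((j : ℕ) - i), by have := j.isLt; omega⟩ else 0

/-- The Gohberg–Semencul expression. -/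
def GSF {n : ℕ} [NeZero n] (x y : Fin n → ℝ) : Matrix (Fin n) (Fin n) ℝ :=
  (x 0)⁻¹ • (Lmat x * Rmat y - L0mat y * R0mat x)

/-- Every absolute column sum of `M` is at most `c`. For `n ≥ 1` this says `matNorm1 M ≤ c`;
the predicate form avoids handling the supremum in `matNorm1` in each estimate. -/
def ColBound {n : ℕ} (M : Matrix (Fin n) (Fin n) ℝ) (c : ℝ) : Prop :=
  ∀ j, ∑ i, |M i j| ≤ c

theorem ColBound.add {n : ℕ} {A B : Matrix (Fin n) (Fin n) ℝ} {a b : ℝ}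
    (hA : ColBound A a) (hB : ColBound B b) : ColBound (A + B) (a + b) := fun j =>
  calc ∑ i, |(A + B) i j| ≤ ∑ i, (|A i j| + |B i j|) :=
        Finset.sum_le_sum fun _ _ => abs_add_le _ _
    _ = ∑ i, |A i j| + ∑ i, |B i j| := Finset.sum_add_distrib
    _ ≤ a + b := add_le_add (hA j) (hB j)

theorem ColBound.smul {n : ℕ} {A : Matrix (Fin n) (Fin n) ℝ} {a : ℝ}
    (hA : ColBound A a) (c : ℝ) : ColBound (c • A) (|c| * a) := fun j => by
  simp only [Matrix.smul_apply, smul_eq_mul, abs_mul, ← Finset.mul_sum]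
  exact mul_le_mul_of_nonneg_left (hA j) (abs_nonneg c)

theorem ColBound.mono {n : ℕ} {A : Matrix (Fin n) (Fin n) ℝ} {a b : ℝ}
    (hA : ColBound A a) (hab : a ≤ b) : ColBound A b := fun j => (hA j).trans hab

theorem ColBound.mul {n : ℕ} {A B : Matrix (Fin n) (Fin n) ℝ} {a b : ℝ}
    (hA : ColBound A a) (hB : ColBound B b) (ha : 0 ≤ a) : ColBound (A * B) (a * b) := fun j =>
  calc ∑ i, |(A * B) i j| ≤ ∑ i, ∑ k, |A i k| * |B k j| := by
        refine Finset.sum_le_sum fun i _ => ?_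
        rw [Matrix.mul_apply]
        refine (Finset.abs_sum_le_sum_abs _ _).trans_eq ?_
        simp only [abs_mul]
    _ = ∑ k, (∑ i, |A i k|) * |B k j| := by
        rw [Finset.sum_comm]
        simp only [Finset.sum_mul]
    _ ≤ ∑ k, a * |B k j| :=
        Finset.sum_le_sum fun k _ => mul_le_mul_of_nonneg_right (hA k) (abs_nonneg _)
    _ = a * ∑ k, |B k j| := by rw [Finset.mul_sum]
    _ ≤ a * b := mul_le_mul_of_nonneg_left (hB j) ha

theorem ColBound.matNorm1_le {n : ℕ} [NeZero n] {A : Matrix (Fin n) (Fin n) ℝ} {a : ℝ}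
    (hA : ColBound A a) : matNorm1 A ≤ a := ciSup_le hA

theorem vecNorm1_nonneg {n : ℕ} (x : Fin n → ℝ) : 0 ≤ vecNorm1 x :=
  Finset.sum_nonneg fun _ _ => abs_nonneg _

/-- A vector whose nonzero entries are entries of `x` at distinct positions has ℓ¹ norm at most
`vecNorm1 x`; the positions are recorded by a map `f` injective on the set `p`. -/
theorem sum_abs_le_vecNorm1 {n : ℕ} (x v : Fin n → ℝ) (p : Fin n → Prop) (f : Fin n → Fin n)
    (hf : ∀ i i', p i → p i' → f i = f i' → i = i')
    (hv : ∀ i, p i → v i = x (f i)) (h0 : ∀ i, ¬ p i → v i = 0) :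
    ∑ i, |v i| ≤ vecNorm1 x := by
  classical
  calc ∑ i, |v i| = ∑ i with p i, |v i| := by
        rw [Finset.sum_filter]
        refine Finset.sum_congr rfl fun i _ => ?_
        split_ifs with h
        · rfl
        · rw [h0 i h, abs_zero]
    _ = ∑ i with p i, |x (f i)| :=
        Finset.sum_congr rfl fun i hi => by rw [hv i (Finset.mem_filter.1 hi).2]
    _ = ∑ k ∈ (Finset.univ.filter p).image f, |x k| := by
        rw [Finset.sum_image]
        intro i hi i' hi' h
        simp only [Finset.coe_filter, Finset.mem_univ, true_and, Set.mem_ofPred_eq] at hi hi'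
        exact hf i i' hi hi' h
    _ ≤ vecNorm1 x :=
        Finset.sum_le_sum_of_subset_of_nonneg (Finset.subset_univ _) fun _ _ _ => abs_nonneg _

theorem colBound_L0mat {n : ℕ} (y : Fin n → ℝ) : ColBound (L0mat y) (vecNorm1 y) := by
  intro j
  refine sum_abs_le_vecNorm1 y _ (fun i => (j : ℕ) < i)
    (fun i => ⟨(i : ℕ) - j - 1, by have := i.isLt; omega⟩) ?_ ?_ ?_
  · intro i i' hi hi' h
    simp only [Fin.mk.injEq] at h
    ext
    omega
  · intro i hi
    simp only [L0mat, Matrix.of_apply, if_pos hi]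
  · intro i hi
    simp only [L0mat, Matrix.of_apply, if_neg hi]

theorem colBound_R0mat {n : ℕ} (x : Fin n → ℝ) : ColBound (R0mat x) (vecNorm1 x) := by
  intro j
  -- Off the range `i < j` the value of the position map is irrelevant; it is set to `j`.
  refine sum_abs_le_vecNorm1 x _ (fun i => (i : ℕ) < j)
    (fun i => if h : (i : ℕ) < j then ⟨n - ((j : ℕ) - i), by have := j.isLt; omega⟩ else j)
    ?_ ?_ ?_
  · intro i i' hi hi' h
    simp only [dif_pos hi, dif_pos hi', Fin.mk.injEq] at h
    ext
    have := j.isLt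
    omega
  · intro i hi
    simp only [R0mat, Matrix.of_apply, dif_pos hi]
  · intro i hi
    simp only [R0mat, Matrix.of_apply, dif_neg hi]

theorem L0mat_sub {n : ℕ} (y z : Fin n → ℝ) : L0mat (y - z) = L0mat y - L0mat z := by
  ext i j
  simp only [L0mat, Matrix.of_apply, Matrix.sub_apply]
  split_ifs <;> simp

theorem R0mat_sub {n : ℕ} (x z : Fin n → ℝ) : R0mat (x - z) = R0mat x - R0mat z := by
  ext i j
  simp only [R0mat, Matrix.of_apply, Matrix.sub_apply]
  split_ifs <;> simp

theorem vecNorm1_le_of_sub {n : ℕ} {x xt : Fin n → ℝ} {ε : ℝ}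
    (h : vecNorm1 (xt - x) ≤ ε * vecNorm1 x) : vecNorm1 xt ≤ (1 + ε) * vecNorm1 x := by
  have : vecNorm1 xt ≤ vecNorm1 (xt - x) + vecNorm1 x := by
    unfold vecNorm1
    rw [← Finset.sum_add_distrib]
    refine Finset.sum_le_sum fun i _ => ?_
    simpa using abs_add_le (xt i - x i) (x i)
  linarith

/-- 1-norm perturbation bound for the second product in the Gohberg–Semencul formula. -/
theorem gsf_second_product_error_norm1 {n : ℕ} [NeZero n] (x y xt yt : Fin n → ℝ)
    (hx : x 0 ≠ 0) (hxt : xt 0 ≠ 0) (ε : ℝ) (hε : 0 < ε)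
    (h1 : vecNorm1 (xt - x) ≤ ε * vecNorm1 x)
    (h2 : vecNorm1 (yt - y) ≤ ε * vecNorm1 y)
    (εt : ℝ) (hεt : εt = |1 / x 0 - 1 / xt 0| / |1 / x 0|) :
    matNorm1 (L0mat yt * ((xt 0)⁻¹ • R0mat xt) - L0mat y * ((x 0)⁻¹ • R0mat x)) ≤
      1 / |x 0| * (ε + (ε + (1 + ε) * εt) * (1 + ε)) * vecNorm1 x * vecNorm1 y := by
  have hc : |(xt 0)⁻¹ - (x 0)⁻¹| = |(x 0)⁻¹| * εt := by
    have : |(x 0)⁻¹| ≠ 0 := abs_ne_zero.2 (inv_ne_zero hx)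
    rw [hεt, one_div, one_div, abs_sub_comm]
    field_simp
  have hεt0 : 0 ≤ εt := by rw [hεt]; positivity
  have hX := vecNorm1_nonneg x
  have hY := vecNorm1_nonneg y
  have hL : ColBound (L0mat yt - L0mat y) (ε * vecNorm1 y) := by
    rw [← L0mat_sub]
    exact (colBound_L0mat _).mono h2
  have hR : ColBound (R0mat xt - R0mat x) (ε * vecNorm1 x) := by
    rw [← R0mat_sub]
    exact (colBound_R0mat _).mono h1
  have hLt := (colBound_L0mat yt).mono (vecNorm1_le_of_sub h2)
  have hRt := (colBound_R0mat xt).mono (vecNorm1_le_of_sub h1)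
  have hsplit : L0mat yt * ((xt 0)⁻¹ • R0mat xt) - L0mat y * ((x 0)⁻¹ • R0mat x) =
      (L0mat yt - L0mat y) * ((x 0)⁻¹ • R0mat x) +
        L0mat yt * ((x 0)⁻¹ • (R0mat xt - R0mat x) + ((xt 0)⁻¹ - (x 0)⁻¹) • R0mat xt) := by
    rw [smul_sub, sub_smul, sub_mul, mul_add, mul_sub, mul_sub]
    abel
  rw [hsplit]
  have key := (hL.mul ((colBound_R0mat x).smul (x 0)⁻¹) (by positivity)).add
    (hLt.mul ((hR.smul (x 0)⁻¹).add (hRt.smul ((xt 0)⁻¹ - (x 0)⁻¹))) (by positivity))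
  refine key.matNorm1_le.trans_eq ?_
  rw [hc, abs_inv, one_div]
  ring

end
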